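/- arXiv:1702.08193 — 2 statements merged into one kernel-verified Lean document; each statement's English description precedes it below -/
import Mathlib

section
/- For every 𝒜 ⊆ {M, C, N}, the end-active variant of the linear nested sequent calculus LNS_E𝒜ConW is complete with respect to the logic E𝒜: if A ∈ E𝒜 then ⇒ A is derivable in the end-active variant of LNS_E𝒜ConW. -/
/-- Monomodal formulas. -/
inductive Fm : Type
  | var : ℕ → Fm
  | bot : Fm
  | top : Fm
  | neg : Fm → Fm
  | and : Fm → Fm → Fm
  | or : Fm → Fm → Fm
  | imp : Fm → Fm → Fm
  | box : Fm → Fm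

/-- Evaluation of the propositional structure of a formula under an assignment
`v` of truth values to formulas (only used on atoms, i.e. propositional
variables and boxed formulas). -/
def evalP (v : Fm → Prop) : Fm → Prop
  | .var n => v (.var n)
  | .bot => False
  | .top => True
  | .neg A => ¬ evalP v A
  | .and A B => evalP v A ∧ evalP v B
  | .or A B => evalP v A ∨ evalP v B
  | .imp A B => evalP v A → evalP v B
  | .box A => v (.box A)

/-- `A` is an instance of a classical propositional tautology. -/
def Taut (A : Fm) : Prop := ∀ v, evalP v A

/-- A component of a (linear nested) sequent: a two-sided multiset sequent. -/
abbrev Cmp := Multiset Fm × Multiset Fm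

/-- A set `𝒜 ⊆ {M, C, N}` of additional axioms for classical modal logic `E`. -/
structure EAx where
  m : Bool := false
  c : Bool := false
  n : Bool := false

/-- Hilbert-style theoremhood in the non-normal modal logic `E𝒜`: classical
propositional logic, the congruence rule, and the axioms among
`M : □(A∧B) → (□A ∧ □B)`, `C : (□A ∧ □B) → □(A∧B)` and `N : □⊤` in `𝒜`. -/
inductive EThm (Ax : EAx) : Fm → Prop
  | taut {A} : Taut A → EThm Ax A
  | mp {A B} : EThm Ax (.imp A B) → EThm Ax A → EThm Ax B
  | cong {A B} : EThm Ax (.imp A B) → EThm Ax (.imp B A) →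
      EThm Ax (.imp (.box A) (.box B))
  | axM {A B} : Ax.m = true →
      EThm Ax (.imp (.box (.and A B)) (.and (.box A) (.box B)))
  | axC {A B} : Ax.c = true →
      EThm Ax (.imp (.and (.box A) (.box B)) (.box (.and A B)))
  | axN : Ax.n = true → EThm Ax (.box .top)

/-- A linear nested sequent of type `LNS^e`: a (nonempty) list of components
joined by the nesting `⫽`, optionally terminated by a binary nesting
`⫽ᵉ(Σ ⇒ Π; Ω ⇒ Θ)`. -/
abbrev LNSe := List Cmp × Option (Cmp × Cmp)

/-- The end-active variant of the calculus `LNS_E𝒜` (optionally with internal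
contraction `con` and weakening `wk`): all rule applications are restricted so
that the active components are the rightmost ones.  The modal rules are always
end-active; the propositional and structural rules are restricted to the last
component. -/
inductive EDe (Ax : EAx) (con wk : Bool) : LNSe → Prop
  | init {pre : List Cmp} {Γ Δ : Multiset Fm} {m : ℕ} :
      EDe Ax con wk (pre ++ [(Fm.var m ::ₘ Γ, Fm.var m ::ₘ Δ)], none)
  | botL {pre Γ Δ} :
      EDe Ax con wk (pre ++ [(Fm.bot ::ₘ Γ, Δ)], none)
  | topR {pre Γ Δ} :
      EDe Ax con wk (pre ++ [(Γ, Fm.top ::ₘ Δ)], none)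
  | negL {pre Γ Δ A} :
      EDe Ax con wk (pre ++ [(Γ, A ::ₘ Δ)], none) →
      EDe Ax con wk (pre ++ [(Fm.neg A ::ₘ Γ, Δ)], none)
  | negR {pre Γ Δ A} :
      EDe Ax con wk (pre ++ [(A ::ₘ Γ, Δ)], none) →
      EDe Ax con wk (pre ++ [(Γ, Fm.neg A ::ₘ Δ)], none)
  | andL {pre Γ Δ A B} :
      EDe Ax con wk (pre ++ [(A ::ₘ B ::ₘ Γ, Δ)], none) →
      EDe Ax con wk (pre ++ [(Fm.and A B ::ₘ Γ, Δ)], none)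
  | andR {pre Γ Δ A B} :
      EDe Ax con wk (pre ++ [(Γ, A ::ₘ Δ)], none) →
      EDe Ax con wk (pre ++ [(Γ, B ::ₘ Δ)], none) →
      EDe Ax con wk (pre ++ [(Γ, Fm.and A B ::ₘ Δ)], none)
  | orL {pre Γ Δ A B} :
      EDe Ax con wk (pre ++ [(A ::ₘ Γ, Δ)], none) →
      EDe Ax con wk (pre ++ [(B ::ₘ Γ, Δ)], none) →
      EDe Ax con wk (pre ++ [(Fm.or A B ::ₘ Γ, Δ)], none)
  | orR {pre Γ Δ A B} :
      EDe Ax con wk (pre ++ [(Γ, A ::ₘ B ::ₘ Δ)], none) →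
      EDe Ax con wk (pre ++ [(Γ, Fm.or A B ::ₘ Δ)], none)
  | impL {pre Γ Δ A B} :
      EDe Ax con wk (pre ++ [(B ::ₘ Γ, Δ)], none) →
      EDe Ax con wk (pre ++ [(Γ, A ::ₘ Δ)], none) →
      EDe Ax con wk (pre ++ [(Fm.imp A B ::ₘ Γ, Δ)], none)
  | impR {pre Γ Δ A B} :
      EDe Ax con wk (pre ++ [(A ::ₘ Γ, B ::ₘ Δ)], none) →
      EDe Ax con wk (pre ++ [(Γ, Fm.imp A B ::ₘ Δ)], none)
  | conL {pre Γ Δ A} : con = true →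
      EDe Ax con wk (pre ++ [(A ::ₘ A ::ₘ Γ, Δ)], none) →
      EDe Ax con wk (pre ++ [(A ::ₘ Γ, Δ)], none)
  | conR {pre Γ Δ A} : con = true →
      EDe Ax con wk (pre ++ [(Γ, A ::ₘ A ::ₘ Δ)], none) →
      EDe Ax con wk (pre ++ [(Γ, A ::ₘ Δ)], none)
  | wkL {pre Γ Δ A} : wk = true →
      EDe Ax con wk (pre ++ [(Γ, Δ)], none) →
      EDe Ax con wk (pre ++ [(A ::ₘ Γ, Δ)], none)
  | wkR {pre Γ Δ A} : wk = true →
      EDe Ax con wk (pre ++ [(Γ, Δ)], none) →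
      EDe Ax con wk (pre ++ [(Γ, A ::ₘ Δ)], none)
  | boxRe {G Γ Δ B} :
      EDe Ax con wk (G ++ [(Γ, Δ)], some ((0, {B}), ({B}, 0))) →
      EDe Ax con wk (G ++ [(Γ, Fm.box B ::ₘ Δ)], none)
  | boxLe {G Γ Δ Sg Pp Om Th A} :
      EDe Ax con wk (G ++ [(Γ, Δ), (A ::ₘ Sg, Pp)], none) →
      EDe Ax con wk (G ++ [(Γ, Δ), (Om, A ::ₘ Th)], none) →
      EDe Ax con wk (G ++ [(Fm.box A ::ₘ Γ, Δ)], some ((Sg, Pp), (Om, Th)))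
  | ruleN {G Γ Δ B} : Ax.n = true →
      EDe Ax con wk (G ++ [(Γ, Δ), (0, {B})], none) →
      EDe Ax con wk (G ++ [(Γ, Fm.box B ::ₘ Δ)], none)
  | ruleM {c G Sg Pp Om Th} : Ax.m = true →
      EDe Ax con wk (c :: G, some ((Sg, Pp), (Fm.bot ::ₘ Om, Th))) →
      EDe Ax con wk (c :: G, some ((Sg, Pp), (Om, Th)))
  | ruleC {G Γ Δ Sg Pp Om Th A} : Ax.c = true →
      EDe Ax con wk (G ++ [(Γ, Δ)], some ((A ::ₘ Sg, Pp), (Om, Th))) →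
      EDe Ax con wk (G ++ [(Γ, Δ), (Om, A ::ₘ Th)], none) →
      EDe Ax con wk (G ++ [(Fm.box A ::ₘ Γ, Δ)], some ((Sg, Pp), (Om, Th)))

/-!
A formula whose sequent is not derivable is refuted in a canonical neighbourhood model for `Ax`,
hence is not a theorem of the Hilbert system.  The worlds are the maximal consistent sets of signed
formulas.  Without the cut rule they need not decide every formula, so a formula `A` determines only
a range of sets of worlds: those containing all worlds that assert `A` and no world that denies it.
The canonical neighbourhoods of a world asserting `□A` comprise this whole range.  If the truth set
of `B` were a neighbourhood of a world denying `□B`, the premisses of a modal rule would be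
derivable, and so would a sequent contained in that world.
-/

/-- Derivability of the sequent `Γ ⇒ Δ` as the last component of a linear nested sequent, whatever
components precede it.  Quantifying over the prefix lets the modal rules reuse a derivation one
nesting deeper. -/
def EndDerivable (Ax : EAx) (Γ Δ : Multiset Fm) : Prop :=
  ∀ G : List Cmp, EDe Ax true true (G ++ [(Γ, Δ)], none)

namespace EndDerivable

variable {Ax : EAx} {Γ Γ' Δ Δ' : Multiset Fm}

theorem snoc (h : EndDerivable Ax Γ Δ) (G : List Cmp) (p : Cmp) :
    EDe Ax true true (G ++ [p, (Γ, Δ)], none) := by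
  simpa using h (G ++ [p])

theorem weaken_left (h : EndDerivable Ax Γ Δ) (Γ' : Multiset Fm) :
    EndDerivable Ax (Γ' + Γ) Δ := by
  induction Γ' using Multiset.induction_on with
  | empty => simpa using h
  | cons A Γ' ih => exact fun G => Multiset.cons_add A Γ' Γ ▸ .wkL rfl (ih G)

theorem weaken_right (h : EndDerivable Ax Γ Δ) (Δ' : Multiset Fm) :
    EndDerivable Ax Γ (Δ' + Δ) := by
  induction Δ' using Multiset.induction_on with
  | empty => simpa using h
  | cons A Δ' ih => exact fun G => Multiset.cons_add A Δ' Δ ▸ .wkR rfl (ih G)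

theorem contract_left (h : EndDerivable Ax (Γ + Γ') Δ) (hΓ : Γ ⊆ Γ') : EndDerivable Ax Γ' Δ := by
  induction Γ using Multiset.induction_on with
  | empty => simpa using h
  | cons A Γ ih =>
    obtain ⟨hA, hΓ⟩ := Multiset.cons_subset.1 hΓ
    obtain ⟨Γ₀, rfl⟩ := Multiset.exists_cons_of_mem hA
    refine ih (fun G => ?_) hΓ
    have hG := h G
    rw [Multiset.cons_add, Multiset.add_cons] at hG
    exact Multiset.add_cons A Γ Γ₀ ▸ .conL rfl hG

theorem contract_right (h : EndDerivable Ax Γ (Δ + Δ')) (hΔ : Δ ⊆ Δ') : EndDerivable Ax Γ Δ' := by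
  induction Δ using Multiset.induction_on with
  | empty => simpa using h
  | cons A Δ ih =>
    obtain ⟨hA, hΔ⟩ := Multiset.cons_subset.1 hΔ
    obtain ⟨Δ₀, rfl⟩ := Multiset.exists_cons_of_mem hA
    refine ih (fun G => ?_) hΔ
    have hG := h G
    rw [Multiset.cons_add, Multiset.add_cons] at hG
    exact Multiset.add_cons A Δ Δ₀ ▸ .conR rfl hG

theorem mono (h : EndDerivable Ax Γ Δ) (hΓ : ∀ A ∈ Γ, A ∈ Γ') (hΔ : ∀ A ∈ Δ, A ∈ Δ') :
    EndDerivable Ax Γ' Δ' := by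
  have hl : EndDerivable Ax Γ' Δ := contract_left (add_comm Γ' Γ ▸ h.weaken_left Γ') hΓ
  exact contract_right (add_comm Δ' Δ ▸ hl.weaken_right Δ') hΔ

end EndDerivable

section ModalRules

variable {Ax : EAx} {B : Fm} {L : Multiset Fm}

theorem EDe.ruleM_append {con wk : Bool} {G : List Cmp} {p : Cmp} {Sg Pp Om Th : Multiset Fm}
    (hm : Ax.m = true)
    (h : EDe Ax con wk (G ++ [p], some ((Sg, Pp), (Fm.bot ::ₘ Om, Th)))) :
    EDe Ax con wk (G ++ [p], some ((Sg, Pp), (Om, Th))) := by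
  cases G <;> exact .ruleM hm h

-- All boxes but the last are unpacked by `C`, which keeps the binary nesting open; the last one
-- closes it by `□_L^e`.
theorem EDe.binaryNesting_of_boxes {Om Pp : Multiset Fm} (hL : L ≠ 0)
    (hc : Ax.c = true ∨ L.card = 1) (Sg : Multiset Fm) (hPp : EndDerivable Ax (L + Sg) Pp)
    (hOm : ∀ A ∈ L, EndDerivable Ax Om {A}) (G : List Cmp) :
    EDe Ax true true (G ++ [(L.map Fm.box, 0)], some ((Sg, Pp), (Om, 0))) := by
  induction L using Multiset.induction_on generalizing Sg with
  | empty => exact absurd rfl hL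
  | cons A L ih =>
    have hA : EndDerivable Ax Om {A} := hOm A (Multiset.mem_cons_self A L)
    rw [Multiset.map_cons]
    rcases eq_or_ne L 0 with rfl | hL₀
    · exact .boxLe (EndDerivable.snoc (by simpa using hPp) G _) (hA.snoc G _)
    · have hc₀ : Ax.c = true := hc.resolve_right (by simpa using hL₀)
      refine .ruleC hc₀ (ih hL₀ (.inl hc₀) (A ::ₘ Sg) ?_ fun C hC => ?_) (hA.snoc G _)
      · rwa [Multiset.add_cons, ← Multiset.cons_add]
      · exact hOm C (Multiset.mem_cons_of_mem hC)

theorem EndDerivable.boxes (hL : L ≠ 0) (hc : Ax.c = true ∨ L.card = 1)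
    (hB : EndDerivable Ax L {B}) (hA : Ax.m = true ∨ ∀ A ∈ L, EndDerivable Ax {B} {A}) :
    EndDerivable Ax (L.map Fm.box) {Fm.box B} := by
  have hB₀ : EndDerivable Ax (L + 0) {B} := by rwa [add_zero]
  refine fun G => .boxRe (Δ := 0) ?_
  rcases hA with hm | hA
  · exact .ruleM_append hm (.binaryNesting_of_boxes hL hc 0 hB₀ (fun _ _ _ => .botL) G)
  · exact .binaryNesting_of_boxes hL hc 0 hB₀ hA G

theorem EndDerivable.box_of_ruleN (hn : Ax.n = true) (hB : EndDerivable Ax 0 {B}) :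
    EndDerivable Ax 0 {Fm.box B} :=
  fun G => .ruleN (Δ := 0) hn (hB.snoc G _)

end ModalRules

/-- A neighbourhood model on the type `W` of worlds: a neighbourhood function and a valuation of
the propositional variables. -/
structure NbhdModel (W : Type*) where
  nbhd : W → Set (Set W)
  val : ℕ → Set W

namespace NbhdModel

variable {W : Type*} {Ax : EAx}

/-- Satisfaction of a formula at a world: `□A` holds where the truth set of `A` is a
neighbourhood. -/
def Sat (M : NbhdModel W) : Fm → W → Prop
  | .var n, w => w ∈ M.val n
  | .bot, _ => False
  | .top, _ => True
  | .neg A, w => ¬ M.Sat A w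
  | .and A B, w => M.Sat A w ∧ M.Sat B w
  | .or A B, w => M.Sat A w ∨ M.Sat B w
  | .imp A B, w => M.Sat A w → M.Sat B w
  | .box A, w => {v | M.Sat A v} ∈ M.nbhd w

/-- The closure conditions on neighbourhoods that correspond to the axioms in `Ax`: supersets for
`M`, binary intersections for `C`, and the whole space for `N`. -/
structure IsModelOf (M : NbhdModel W) (Ax : EAx) : Prop where
  superset_mem : Ax.m = true → ∀ ⦃w U V⦄, U ∈ M.nbhd w → U ⊆ V → V ∈ M.nbhd w
  inter_mem : Ax.c = true → ∀ ⦃w U V⦄, U ∈ M.nbhd w → V ∈ M.nbhd w → U ∩ V ∈ M.nbhd w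
  univ_mem : Ax.n = true → ∀ w, Set.univ ∈ M.nbhd w

theorem evalP_sat_iff (M : NbhdModel W) (w : W) (A : Fm) :
    evalP (M.Sat · w) A ↔ M.Sat A w := by
  induction A <;> simp_all only [evalP, Sat]

theorem IsModelOf.sat_of_eThm {M : NbhdModel W} (hM : M.IsModelOf Ax) {A : Fm} (h : EThm Ax A)
    (w : W) : M.Sat A w := by
  induction h generalizing w with
  | taut h => exact (M.evalP_sat_iff w _).1 (h _)
  | mp _ _ ihAB ihA => exact ihAB w (ihA w)
  | @cong A B _ _ ihAB ihBA =>
    have hAB : {v | M.Sat A v} = {v | M.Sat B v} := Set.ext fun v => ⟨ihAB v, ihBA v⟩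
    exact fun hA => (hAB ▸ hA : {v | M.Sat B v} ∈ M.nbhd w)
  | axM hm =>
    exact fun h => ⟨hM.superset_mem hm h fun _ hv => hv.1, hM.superset_mem hm h fun _ hv => hv.2⟩
  | axC hc => exact fun h => hM.inter_mem hc h.1 h.2
  | axN hn => exact hM.univ_mem hn w

end NbhdModel

/-- Consistency of a set of signed formulas, where `Sum.inl A` puts `A` in the antecedent and
`Sum.inr A` puts it in the succedent: no sequent with its formulas in the set is derivable. -/
def Consistent (Ax : EAx) (X : Set (Fm ⊕ Fm)) : Prop :=
  ∀ ⦃Γ Δ : Multiset Fm⦄, (∀ F ∈ Γ.disjSum Δ, F ∈ X) → ¬ EndDerivable Ax Γ Δ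

theorem isOfFiniteCharacter_consistent (Ax : EAx) :
    Order.IsOfFiniteCharacter {X | Consistent Ax X} := by
  refine fun X => ⟨fun hX Y hYX _ Γ Δ hY => hX fun F hF => hYX (hY F hF), fun h Γ Δ hX => ?_⟩
  exact h {F | F ∈ Γ.disjSum Δ} hX (Γ.disjSum Δ).finite_toSet fun _ hF => hF

/-- The worlds of the canonical model: the maximal consistent sets of signed formulas. -/
def World (Ax : EAx) : Type :=
  {X : Set (Fm ⊕ Fm) // Maximal (Consistent Ax) X}

namespace World

variable {Ax : EAx} {A B : Fm} {Γ Δ : Multiset Fm} (w : World Ax)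

/-- The formulas that the world `w` places in the antecedent. -/
def pos : Set Fm := Sum.inl ⁻¹' w.1

/-- The formulas that the world `w` places in the succedent.  As there is no cut rule, a formula
may lie in neither `w.pos` nor `w.neg`. -/
def neg : Set Fm := Sum.inr ⁻¹' w.1

theorem not_endDerivable (hΓ : ∀ A ∈ Γ, A ∈ w.pos) (hΔ : ∀ A ∈ Δ, A ∈ w.neg) :
    ¬ EndDerivable Ax Γ Δ := by
  refine w.2.prop fun F hF => ?_
  rcases Multiset.mem_disjSum.1 hF with ⟨A, hA, rfl⟩ | ⟨A, hA, rfl⟩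
  exacts [hΓ A hA, hΔ A hA]

theorem exists_of_not_endDerivable (h : ¬ EndDerivable Ax Γ Δ) :
    ∃ w : World Ax, (∀ A ∈ Γ, A ∈ w.pos) ∧ ∀ A ∈ Δ, A ∈ w.neg := by
  have hX : Consistent Ax {F | F ∈ Γ.disjSum Δ} := fun Γ' Δ' hsub hder =>
    h (hder.mono (fun A hA => Multiset.inl_mem_disjSum.1 (hsub _ (Multiset.inl_mem_disjSum.2 hA)))
      fun A hA => Multiset.inr_mem_disjSum.1 (hsub _ (Multiset.inr_mem_disjSum.2 hA)))
  obtain ⟨Y, hXY, hY⟩ := (isOfFiniteCharacter_consistent Ax).exists_maximal hX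
  exact ⟨⟨Y, hY⟩, fun A hA => hXY (Multiset.inl_mem_disjSum.2 hA),
    fun A hA => hXY (Multiset.inr_mem_disjSum.2 hA)⟩

theorem endDerivable_singleton_of_forall (h : ∀ w : World Ax, (∀ A ∈ Γ, A ∈ w.pos) → B ∉ w.neg) :
    EndDerivable Ax Γ {B} := by
  by_contra hΓ
  obtain ⟨w, hpos, hneg⟩ := exists_of_not_endDerivable hΓ
  exact h w hpos (hneg B (Multiset.mem_singleton_self B))

theorem exists_endDerivable_of_notMem {F : Fm ⊕ Fm} (hF : F ∉ w.1) :
    ∃ Γ Δ : Multiset Fm, (∀ E ∈ Γ.disjSum Δ, E = F ∨ E ∈ w.1) ∧ EndDerivable Ax Γ Δ := by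
  have hins : ¬ Consistent Ax (insert F w.1) := fun h =>
    hF (w.2.mem_of_prop_insert h)
  simpa only [Consistent, Set.mem_insert_iff, not_forall, not_not, exists_prop] using hins

theorem exists_cons_left_of_notMem_pos (hA : A ∉ w.pos) :
    ∃ Γ Δ : Multiset Fm, (∀ C ∈ Γ, C ∈ w.pos) ∧ (∀ C ∈ Δ, C ∈ w.neg) ∧
      EndDerivable Ax (A ::ₘ Γ) Δ := by
  classical
  obtain ⟨Γ, Δ, hsub, hder⟩ := w.exists_endDerivable_of_notMem hA
  have hΓ : ∀ C ∈ Γ, C = A ∨ C ∈ w.pos := fun C hC =>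
    (hsub (.inl C) (Multiset.inl_mem_disjSum.2 hC)).imp_left Sum.inl.inj
  have hΔ : ∀ C ∈ Δ, C ∈ w.neg := fun C hC =>
    (hsub (.inr C) (Multiset.inr_mem_disjSum.2 hC)).resolve_left Sum.inr_ne_inl
  exact ⟨Γ.filter (· ∈ w.pos), Δ, fun _ => Multiset.of_mem_filter, hΔ,
    hder.mono (fun C hC => by simpa [hC] using hΓ C hC) fun _ => id⟩

theorem exists_cons_right_of_notMem_neg (hA : A ∉ w.neg) :
    ∃ Γ Δ : Multiset Fm, (∀ C ∈ Γ, C ∈ w.pos) ∧ (∀ C ∈ Δ, C ∈ w.neg) ∧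
      EndDerivable Ax Γ (A ::ₘ Δ) := by
  classical
  obtain ⟨Γ, Δ, hsub, hder⟩ := w.exists_endDerivable_of_notMem hA
  have hΓ : ∀ C ∈ Γ, C ∈ w.pos := fun C hC =>
    (hsub (.inl C) (Multiset.inl_mem_disjSum.2 hC)).resolve_left Sum.inl_ne_inr
  have hΔ : ∀ C ∈ Δ, C = A ∨ C ∈ w.neg := fun C hC =>
    (hsub (.inr C) (Multiset.inr_mem_disjSum.2 hC)).imp_left Sum.inr.inj
  exact ⟨Γ, Δ.filter (· ∈ w.neg), hΓ, fun _ => Multiset.of_mem_filter,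
    hder.mono (fun _ => id) fun C hC => by simpa [hC] using hΔ C hC⟩

theorem mem_neg_of_neg_mem_pos (h : Fm.neg A ∈ w.pos) : A ∈ w.neg := by
  by_contra hA
  obtain ⟨Γ, Δ, hΓ, hΔ, hder⟩ := w.exists_cons_right_of_notMem_neg hA
  exact w.not_endDerivable (Multiset.forall_mem_cons.2 ⟨h, hΓ⟩) hΔ fun G => .negL (hder G)

theorem mem_pos_of_neg_mem_neg (h : Fm.neg A ∈ w.neg) : A ∈ w.pos := by
  by_contra hA
  obtain ⟨Γ, Δ, hΓ, hΔ, hder⟩ := w.exists_cons_left_of_notMem_pos hA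
  exact w.not_endDerivable hΓ (Multiset.forall_mem_cons.2 ⟨h, hΔ⟩) fun G => .negR (hder G)

theorem mem_pos_and_mem_pos_of_and_mem_pos (h : Fm.and A B ∈ w.pos) :
    A ∈ w.pos ∧ B ∈ w.pos := by
  constructor
  · by_contra hA
    obtain ⟨Γ, Δ, hΓ, hΔ, hder⟩ := w.exists_cons_left_of_notMem_pos hA
    have hAB : EndDerivable Ax (A ::ₘ B ::ₘ Γ) Δ := hder.mono (by grind) (by grind)
    exact w.not_endDerivable (Multiset.forall_mem_cons.2 ⟨h, hΓ⟩) hΔ fun G => .andL (hAB G)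
  · by_contra hB
    obtain ⟨Γ, Δ, hΓ, hΔ, hder⟩ := w.exists_cons_left_of_notMem_pos hB
    have hAB : EndDerivable Ax (A ::ₘ B ::ₘ Γ) Δ := hder.mono (by grind) (by grind)
    exact w.not_endDerivable (Multiset.forall_mem_cons.2 ⟨h, hΓ⟩) hΔ fun G => .andL (hAB G)

theorem mem_neg_or_mem_neg_of_and_mem_neg (h : Fm.and A B ∈ w.neg) :
    A ∈ w.neg ∨ B ∈ w.neg := by
  by_contra! hAB
  obtain ⟨Γ₁, Δ₁, hΓ₁, hΔ₁, hA⟩ := w.exists_cons_right_of_notMem_neg hAB.1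
  obtain ⟨Γ₂, Δ₂, hΓ₂, hΔ₂, hB⟩ := w.exists_cons_right_of_notMem_neg hAB.2
  have hA' : EndDerivable Ax (Γ₁ + Γ₂) (A ::ₘ (Δ₁ + Δ₂)) := hA.mono (by grind) (by grind)
  have hB' : EndDerivable Ax (Γ₁ + Γ₂) (B ::ₘ (Δ₁ + Δ₂)) := hB.mono (by grind) (by grind)
  exact w.not_endDerivable (Γ := Γ₁ + Γ₂) (Δ := Fm.and A B ::ₘ (Δ₁ + Δ₂)) (by grind) (by grind)
    fun G => .andR (hA' G) (hB' G)

theorem mem_pos_or_mem_pos_of_or_mem_pos (h : Fm.or A B ∈ w.pos) :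
    A ∈ w.pos ∨ B ∈ w.pos := by
  by_contra! hAB
  obtain ⟨Γ₁, Δ₁, hΓ₁, hΔ₁, hA⟩ := w.exists_cons_left_of_notMem_pos hAB.1
  obtain ⟨Γ₂, Δ₂, hΓ₂, hΔ₂, hB⟩ := w.exists_cons_left_of_notMem_pos hAB.2
  have hA' : EndDerivable Ax (A ::ₘ (Γ₁ + Γ₂)) (Δ₁ + Δ₂) := hA.mono (by grind) (by grind)
  have hB' : EndDerivable Ax (B ::ₘ (Γ₁ + Γ₂)) (Δ₁ + Δ₂) := hB.mono (by grind) (by grind)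
  exact w.not_endDerivable (Γ := Fm.or A B ::ₘ (Γ₁ + Γ₂)) (Δ := Δ₁ + Δ₂) (by grind) (by grind)
    fun G => .orL (hA' G) (hB' G)

theorem mem_neg_and_mem_neg_of_or_mem_neg (h : Fm.or A B ∈ w.neg) :
    A ∈ w.neg ∧ B ∈ w.neg := by
  constructor
  · by_contra hA
    obtain ⟨Γ, Δ, hΓ, hΔ, hder⟩ := w.exists_cons_right_of_notMem_neg hA
    have hAB : EndDerivable Ax Γ (A ::ₘ B ::ₘ Δ) := hder.mono (by grind) (by grind)
    exact w.not_endDerivable hΓ (Multiset.forall_mem_cons.2 ⟨h, hΔ⟩) fun G => .orR (hAB G)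
  · by_contra hB
    obtain ⟨Γ, Δ, hΓ, hΔ, hder⟩ := w.exists_cons_right_of_notMem_neg hB
    have hAB : EndDerivable Ax Γ (A ::ₘ B ::ₘ Δ) := hder.mono (by grind) (by grind)
    exact w.not_endDerivable hΓ (Multiset.forall_mem_cons.2 ⟨h, hΔ⟩) fun G => .orR (hAB G)

theorem mem_neg_or_mem_pos_of_imp_mem_pos (h : Fm.imp A B ∈ w.pos) :
    A ∈ w.neg ∨ B ∈ w.pos := by
  by_contra! hAB
  obtain ⟨Γ₁, Δ₁, hΓ₁, hΔ₁, hA⟩ := w.exists_cons_right_of_notMem_neg hAB.1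
  obtain ⟨Γ₂, Δ₂, hΓ₂, hΔ₂, hB⟩ := w.exists_cons_left_of_notMem_pos hAB.2
  have hA' : EndDerivable Ax (Γ₁ + Γ₂) (A ::ₘ (Δ₁ + Δ₂)) := hA.mono (by grind) (by grind)
  have hB' : EndDerivable Ax (B ::ₘ (Γ₁ + Γ₂)) (Δ₁ + Δ₂) := hB.mono (by grind) (by grind)
  exact w.not_endDerivable (Γ := Fm.imp A B ::ₘ (Γ₁ + Γ₂)) (Δ := Δ₁ + Δ₂) (by grind) (by grind)
    fun G => .impL (hB' G) (hA' G)

theorem mem_pos_and_mem_neg_of_imp_mem_neg (h : Fm.imp A B ∈ w.neg) :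
    A ∈ w.pos ∧ B ∈ w.neg := by
  constructor
  · by_contra hA
    obtain ⟨Γ, Δ, hΓ, hΔ, hder⟩ := w.exists_cons_left_of_notMem_pos hA
    have hAB : EndDerivable Ax (A ::ₘ Γ) (B ::ₘ Δ) := hder.mono (by grind) (by grind)
    exact w.not_endDerivable hΓ (Multiset.forall_mem_cons.2 ⟨h, hΔ⟩) fun G => .impR (hAB G)
  · by_contra hB
    obtain ⟨Γ, Δ, hΓ, hΔ, hder⟩ := w.exists_cons_right_of_notMem_neg hB
    have hAB : EndDerivable Ax (A ::ₘ Γ) (B ::ₘ Δ) := hder.mono (by grind) (by grind)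
    exact w.not_endDerivable hΓ (Multiset.forall_mem_cons.2 ⟨h, hΔ⟩) fun G => .impR (hAB G)

/-- `w.IsBoxBasis L U` says that the formulas `□A ∈ w.pos` with `A` in `L` make `U` a neighbourhood
of `w`.  Since worlds may leave formulas undecided, `L` does not determine a truth set: `U` is any
set that contains the worlds placing all of `L` in the antecedent and, unless `M` makes
neighbourhoods upward closed, no world placing some formula of `L` in the succedent.  Several boxes
are used together only if `C` is available. -/
structure IsBoxBasis (L : Multiset Fm) (U : Set (World Ax)) : Prop where
  ne_zero : L ≠ 0
  axC_or_card_eq_one : Ax.c = true ∨ L.card = 1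
  box_mem_pos : ∀ A ∈ L, Fm.box A ∈ w.pos
  mem_of_forall_mem_pos : ∀ v : World Ax, (∀ A ∈ L, A ∈ v.pos) → v ∈ U
  axM_or_notMem_neg : Ax.m = true ∨ ∀ A ∈ L, ∀ v ∈ U, A ∉ v.neg

/-- The neighbourhoods of `w` in the canonical model. -/
def canonicalNbhd : Set (Set (World Ax)) :=
  {U | (Ax.n = true ∧ U = Set.univ) ∨ ∃ L, w.IsBoxBasis L U}

variable {w} in
theorem IsBoxBasis.superset {L : Multiset Fm} {U V : Set (World Ax)} (hU : w.IsBoxBasis L U)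
    (hm : Ax.m = true) (hUV : U ⊆ V) : w.IsBoxBasis L V :=
  { hU with
    mem_of_forall_mem_pos := fun v hv => hUV (hU.mem_of_forall_mem_pos v hv)
    axM_or_notMem_neg := .inl hm }

variable {w} in
theorem IsBoxBasis.inter {K L : Multiset Fm} {U V : Set (World Ax)} (hU : w.IsBoxBasis K U)
    (hV : w.IsBoxBasis L V) (hc : Ax.c = true) : w.IsBoxBasis (K + L) (U ∩ V) where
  ne_zero := by simp [hU.ne_zero]
  axC_or_card_eq_one := .inl hc
  box_mem_pos := by grind [hU.box_mem_pos, hV.box_mem_pos]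
  mem_of_forall_mem_pos v hv :=
    ⟨hU.mem_of_forall_mem_pos v fun A hA => hv A (Multiset.mem_add.2 (.inl hA)),
      hV.mem_of_forall_mem_pos v fun A hA => hv A (Multiset.mem_add.2 (.inr hA))⟩
  axM_or_notMem_neg := by grind [hU.axM_or_notMem_neg, hV.axM_or_notMem_neg]

/-- The canonical neighbourhood model of the calculus. -/
def canonicalModel (Ax : EAx) : NbhdModel (World Ax) where
  nbhd := canonicalNbhd
  val n := {w | Fm.var n ∈ w.pos}

theorem canonicalModel_isModelOf (Ax : EAx) : (canonicalModel Ax).IsModelOf Ax where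
  superset_mem hm w U V hU hUV := by
    rcases hU with ⟨hn, rfl⟩ | ⟨L, hL⟩
    · exact .inl ⟨hn, Set.univ_subset_iff.1 hUV⟩
    · exact .inr ⟨L, hL.superset hm hUV⟩
  inter_mem hc w U V hU hV := by
    rcases hU with ⟨-, rfl⟩ | ⟨K, hK⟩
    · rwa [Set.univ_inter]
    rcases hV with ⟨-, rfl⟩ | ⟨L, hL⟩
    · rw [Set.inter_univ]
      exact .inr ⟨K, hK⟩
    · exact .inr ⟨K + L, hK.inter hL hc⟩
  univ_mem hn w := .inl ⟨hn, rfl⟩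

theorem mem_canonicalNbhd_of_box_mem_pos {U : Set (World Ax)} (hB : Fm.box B ∈ w.pos)
    (hpos : ∀ v : World Ax, B ∈ v.pos → v ∈ U) (hneg : ∀ v : World Ax, B ∈ v.neg → v ∉ U) :
    U ∈ w.canonicalNbhd :=
  .inr ⟨{B}, by simp, by simp, by simpa using hB, by simpa using hpos,
    .inr (by simpa using fun v hvU hv => hneg v hv hvU)⟩

theorem notMem_canonicalNbhd_of_box_mem_neg {U : Set (World Ax)} (hB : Fm.box B ∈ w.neg)
    (hpos : ∀ v : World Ax, B ∈ v.pos → v ∈ U) (hneg : ∀ v : World Ax, B ∈ v.neg → v ∉ U) :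
    U ∉ w.canonicalNbhd := by
  rintro (⟨hn, rfl⟩ | ⟨L, hL⟩)
  · have hder : EndDerivable Ax 0 {B} :=
      endDerivable_singleton_of_forall fun v _ hv => hneg v hv trivial
    exact w.not_endDerivable (by simp) (by simpa using hB) (hder.box_of_ruleN hn)
  · have hLB : EndDerivable Ax L {B} :=
      endDerivable_singleton_of_forall fun v hv hBv => hneg v hBv (hL.mem_of_forall_mem_pos v hv)
    have hBL : Ax.m = true ∨ ∀ A ∈ L, EndDerivable Ax {B} {A} :=
      hL.axM_or_notMem_neg.imp_right fun h A hA =>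
        endDerivable_singleton_of_forall fun v hv =>
          h A hA v (hpos v (hv B (Multiset.mem_singleton_self B)))
    exact w.not_endDerivable (by simpa using hL.box_mem_pos) (by simpa using hB)
      (.boxes hL.ne_zero hL.axC_or_card_eq_one hLB hBL)

theorem truth_lemma (A : Fm) (w : World Ax) :
    (A ∈ w.pos → (canonicalModel Ax).Sat A w) ∧ (A ∈ w.neg → ¬ (canonicalModel Ax).Sat A w) := by
  induction A generalizing w with
  | var n =>
    refine ⟨id, fun hneg (hpos : Fm.var n ∈ w.pos) => ?_⟩
    exact w.not_endDerivable (Γ := {.var n}) (Δ := {.var n}) (by simpa using hpos)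
      (by simpa using hneg) fun G => .init (Γ := 0) (Δ := 0)
  | bot =>
    refine ⟨fun h => ?_, fun _ => id⟩
    exact w.not_endDerivable (Γ := {.bot}) (Δ := 0) (by simpa using h) (by simp)
      fun G => .botL (Γ := 0)
  | top =>
    refine ⟨fun _ => trivial, fun h => ?_⟩
    exact absurd (fun G => .topR (Δ := 0)) <|
      w.not_endDerivable (Γ := 0) (Δ := {.top}) (by simp) (by simpa using h)
  | neg A ih =>
    exact ⟨fun h => (ih w).2 (w.mem_neg_of_neg_mem_pos h),
      fun h => not_not_intro ((ih w).1 (w.mem_pos_of_neg_mem_neg h))⟩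
  | and A B ihA ihB =>
    exact ⟨fun h => (w.mem_pos_and_mem_pos_of_and_mem_pos h).imp (ihA w).1 (ihB w).1,
      fun h => not_and_or.2 ((w.mem_neg_or_mem_neg_of_and_mem_neg h).imp (ihA w).2 (ihB w).2)⟩
  | or A B ihA ihB =>
    exact ⟨fun h => (w.mem_pos_or_mem_pos_of_or_mem_pos h).imp (ihA w).1 (ihB w).1,
      fun h => not_or.2 ((w.mem_neg_and_mem_neg_of_or_mem_neg h).imp (ihA w).2 (ihB w).2)⟩
  | imp A B ihA ihB =>
    exact ⟨fun h => imp_iff_not_or.2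
        ((w.mem_neg_or_mem_pos_of_imp_mem_pos h).imp (ihA w).2 (ihB w).1),
      fun h => Classical.not_imp.2
        ((w.mem_pos_and_mem_neg_of_imp_mem_neg h).imp (ihA w).1 (ihB w).2)⟩
  | box B ih =>
    exact ⟨fun h => w.mem_canonicalNbhd_of_box_mem_pos h (fun v => (ih v).1) fun v => (ih v).2,
      fun h => w.notMem_canonicalNbhd_of_box_mem_neg h (fun v => (ih v).1) fun v => (ih v).2⟩

end World

/-- Completeness of the end-active variant of `LNS_E𝒜ConW` for the non-normal
modal logic `E𝒜` (`𝒜 ⊆ {M, C, N}`): if `A ∈ E𝒜` then `⇒ A` is derivable in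
the end-active variant of `LNS_E𝒜ConW`. -/
theorem endActive_LNSe_complete (Ax : EAx) (A : Fm) (h : EThm Ax A) :
    EDe Ax true true ([(0, {A})], none) := by
  have hder : EndDerivable Ax 0 {A} := World.endDerivable_singleton_of_forall fun w _ hneg =>
    (w.truth_lemma A).2 hneg ((World.canonicalModel_isModelOf Ax).sat_of_eThm h w)
  exact hder []
end

section
/- For every 𝒜 ⊆ {M, C, N}: if a sequent Γ ⇒ Δ is derivable in LNS_E𝒜Con, then it is derivable in the corresponding sequent calculus G_E𝒜Con. Consequently, if ⇒ A is derivable in LNS_E𝒜ConW then A ∈ E𝒜 (soundness). -/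
/-- The linear nested sequent calculus `LNS_E𝒜` for non-normal modal logics,
optionally extended with internal contraction (`con`) and weakening (`wk`):
classical propositional rules applied in any component (but not inside `⫽ᵉ`),
the modal rules `□_R^e` and `□_L^e`, and the rules `N`, `M`, `C` for the
corresponding axioms in `𝒜`. -/
inductive ED (Ax : EAx) (con wk : Bool) : LNSe → Prop
  | init {pre post : List Cmp} {ep} {Γ Δ : Multiset Fm} {m : ℕ} :
      ED Ax con wk (pre ++ (Fm.var m ::ₘ Γ, Fm.var m ::ₘ Δ) :: post, ep)
  | botL {pre post ep Γ Δ} :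
      ED Ax con wk (pre ++ (Fm.bot ::ₘ Γ, Δ) :: post, ep)
  | topR {pre post ep Γ Δ} :
      ED Ax con wk (pre ++ (Γ, Fm.top ::ₘ Δ) :: post, ep)
  | negL {pre post ep Γ Δ A} :
      ED Ax con wk (pre ++ (Γ, A ::ₘ Δ) :: post, ep) →
      ED Ax con wk (pre ++ (Fm.neg A ::ₘ Γ, Δ) :: post, ep)
  | negR {pre post ep Γ Δ A} :
      ED Ax con wk (pre ++ (A ::ₘ Γ, Δ) :: post, ep) →
      ED Ax con wk (pre ++ (Γ, Fm.neg A ::ₘ Δ) :: post, ep)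
  | andL {pre post ep Γ Δ A B} :
      ED Ax con wk (pre ++ (A ::ₘ B ::ₘ Γ, Δ) :: post, ep) →
      ED Ax con wk (pre ++ (Fm.and A B ::ₘ Γ, Δ) :: post, ep)
  | andR {pre post ep Γ Δ A B} :
      ED Ax con wk (pre ++ (Γ, A ::ₘ Δ) :: post, ep) →
      ED Ax con wk (pre ++ (Γ, B ::ₘ Δ) :: post, ep) →
      ED Ax con wk (pre ++ (Γ, Fm.and A B ::ₘ Δ) :: post, ep)
  | orL {pre post ep Γ Δ A B} :
      ED Ax con wk (pre ++ (A ::ₘ Γ, Δ) :: post, ep) →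
      ED Ax con wk (pre ++ (B ::ₘ Γ, Δ) :: post, ep) →
      ED Ax con wk (pre ++ (Fm.or A B ::ₘ Γ, Δ) :: post, ep)
  | orR {pre post ep Γ Δ A B} :
      ED Ax con wk (pre ++ (Γ, A ::ₘ B ::ₘ Δ) :: post, ep) →
      ED Ax con wk (pre ++ (Γ, Fm.or A B ::ₘ Δ) :: post, ep)
  | impL {pre post ep Γ Δ A B} :
      ED Ax con wk (pre ++ (B ::ₘ Γ, Δ) :: post, ep) →
      ED Ax con wk (pre ++ (Γ, A ::ₘ Δ) :: post, ep) →
      ED Ax con wk (pre ++ (Fm.imp A B ::ₘ Γ, Δ) :: post, ep)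
  | impR {pre post ep Γ Δ A B} :
      ED Ax con wk (pre ++ (A ::ₘ Γ, B ::ₘ Δ) :: post, ep) →
      ED Ax con wk (pre ++ (Γ, Fm.imp A B ::ₘ Δ) :: post, ep)
  | conL {pre post ep Γ Δ A} : con = true →
      ED Ax con wk (pre ++ (A ::ₘ A ::ₘ Γ, Δ) :: post, ep) →
      ED Ax con wk (pre ++ (A ::ₘ Γ, Δ) :: post, ep)
  | conR {pre post ep Γ Δ A} : con = true →
      ED Ax con wk (pre ++ (Γ, A ::ₘ A ::ₘ Δ) :: post, ep) →
      ED Ax con wk (pre ++ (Γ, A ::ₘ Δ) :: post, ep)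
  | wkL {pre post ep Γ Δ A} : wk = true →
      ED Ax con wk (pre ++ (Γ, Δ) :: post, ep) →
      ED Ax con wk (pre ++ (A ::ₘ Γ, Δ) :: post, ep)
  | wkR {pre post ep Γ Δ A} : wk = true →
      ED Ax con wk (pre ++ (Γ, Δ) :: post, ep) →
      ED Ax con wk (pre ++ (Γ, A ::ₘ Δ) :: post, ep)
  | boxRe {G Γ Δ B} :
      ED Ax con wk (G ++ [(Γ, Δ)], some ((0, {B}), ({B}, 0))) →
      ED Ax con wk (G ++ [(Γ, Fm.box B ::ₘ Δ)], none)
  | boxLe {G Γ Δ Sg Pp Om Th A} :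
      ED Ax con wk (G ++ [(Γ, Δ), (A ::ₘ Sg, Pp)], none) →
      ED Ax con wk (G ++ [(Γ, Δ), (Om, A ::ₘ Th)], none) →
      ED Ax con wk (G ++ [(Fm.box A ::ₘ Γ, Δ)], some ((Sg, Pp), (Om, Th)))
  | ruleN {G Γ Δ B} : Ax.n = true →
      ED Ax con wk (G ++ [(Γ, Δ), (0, {B})], none) →
      ED Ax con wk (G ++ [(Γ, Fm.box B ::ₘ Δ)], none)
  | ruleM {c G Sg Pp Om Th} : Ax.m = true →
      ED Ax con wk (c :: G, some ((Sg, Pp), (Fm.bot ::ₘ Om, Th))) →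
      ED Ax con wk (c :: G, some ((Sg, Pp), (Om, Th)))
  | ruleC {G Γ Δ Sg Pp Om Th A} : Ax.c = true →
      ED Ax con wk (G ++ [(Γ, Δ)], some ((A ::ₘ Sg, Pp), (Om, Th))) →
      ED Ax con wk (G ++ [(Γ, Δ), (Om, A ::ₘ Th)], none) →
      ED Ax con wk (G ++ [(Fm.box A ::ₘ Γ, Δ)], some ((Sg, Pp), (Om, Th)))

/-- The sequent calculus `G_E𝒜Con` for the non-normal modal logic `E𝒜`:
the classical propositional sequent calculus with explicit contraction rules,
together with the modal rules `(E)` (for `G_E`, `G_EN`), `(En)` (for `G_EC`,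
`G_ECN`), `(M)` (for `G_M`, `G_MN`), `(Mn)` (for `G_MC`, `G_MCN`) and `(N)`
(when `N ∈ 𝒜`). -/
inductive GE (Ax : EAx) : Multiset Fm → Multiset Fm → Prop
  | init {Γ Δ : Multiset Fm} {m : ℕ} : GE Ax (Fm.var m ::ₘ Γ) (Fm.var m ::ₘ Δ)
  | botL {Γ Δ} : GE Ax (Fm.bot ::ₘ Γ) Δ
  | topR {Γ Δ} : GE Ax Γ (Fm.top ::ₘ Δ)
  | negL {Γ Δ A} : GE Ax Γ (A ::ₘ Δ) → GE Ax (Fm.neg A ::ₘ Γ) Δ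
  | negR {Γ Δ A} : GE Ax (A ::ₘ Γ) Δ → GE Ax Γ (Fm.neg A ::ₘ Δ)
  | andL {Γ Δ A B} : GE Ax (A ::ₘ B ::ₘ Γ) Δ → GE Ax (Fm.and A B ::ₘ Γ) Δ
  | andR {Γ Δ A B} : GE Ax Γ (A ::ₘ Δ) → GE Ax Γ (B ::ₘ Δ) → GE Ax Γ (Fm.and A B ::ₘ Δ)
  | orL {Γ Δ A B} : GE Ax (A ::ₘ Γ) Δ → GE Ax (B ::ₘ Γ) Δ → GE Ax (Fm.or A B ::ₘ Γ) Δ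
  | orR {Γ Δ A B} : GE Ax Γ (A ::ₘ B ::ₘ Δ) → GE Ax Γ (Fm.or A B ::ₘ Δ)
  | impL {Γ Δ A B} : GE Ax (B ::ₘ Γ) Δ → GE Ax Γ (A ::ₘ Δ) → GE Ax (Fm.imp A B ::ₘ Γ) Δ
  | impR {Γ Δ A B} : GE Ax (A ::ₘ Γ) (B ::ₘ Δ) → GE Ax Γ (Fm.imp A B ::ₘ Δ)
  | conL {Γ Δ A} : GE Ax (A ::ₘ A ::ₘ Γ) Δ → GE Ax (A ::ₘ Γ) Δ
  | conR {Γ Δ A} : GE Ax Γ (A ::ₘ A ::ₘ Δ) → GE Ax Γ (A ::ₘ Δ)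
  | ruleE {Γ Δ A B} : Ax.m = false → Ax.c = false →
      GE Ax {A} {B} → GE Ax {B} {A} →
      GE Ax (Fm.box A ::ₘ Γ) (Fm.box B ::ₘ Δ)
  | ruleEn {Γ Δ B} {l : List Fm} : Ax.m = false → Ax.c = true → l ≠ [] →
      GE Ax (↑l) {B} → (∀ A ∈ l, GE Ax {B} {A}) →
      GE Ax ((↑(l.map Fm.box) : Multiset Fm) + Γ) (Fm.box B ::ₘ Δ)
  | ruleM {Γ Δ A B} : Ax.m = true → Ax.c = false →
      GE Ax {A} {B} →
      GE Ax (Fm.box A ::ₘ Γ) (Fm.box B ::ₘ Δ)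
  | ruleMn {Γ Δ B} {l : List Fm} : Ax.m = true → Ax.c = true →
      (l ≠ [] ∨ Ax.n = true) →
      GE Ax (↑l) {B} →
      GE Ax ((↑(l.map Fm.box) : Multiset Fm) + Γ) (Fm.box B ::ₘ Δ)
  | ruleN {Γ Δ A} : Ax.n = true →
      GE Ax 0 {A} → GE Ax Γ (Fm.box A ::ₘ Δ)

/-!
In a derivation of a linear nested sequent, some single component is already derivable in the
sequent calculus. The components of an open binary nesting `⫽ᵉ(Σ ⇒ Π; Ω ⇒ Θ)` are not sequents
to be derived but a modal rule under construction: `Σ` collects the formulas whose boxes have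
been consumed so far, and `Π = {B}`. Hence, as long as the nesting is open, the last component is
read with the missing formulas `□Σ ⇒ □B` added to it. The rule closing the nesting either
completes a modal rule of the sequent calculus, or derives one of the older components, which
then only has to be weakened.

For soundness with respect to the Hilbert system, a sequent is read semantically: the valuations
of atoms and boxed formulas satisfying some theorem of `E𝒜` form a base of a filter, and derivable
sequents hold eventually along this filter. Propositional rules are then rules about truth
values, and only the modal ones need the axioms of `E𝒜`.
-/

namespace GE

variable {Ax : EAx} {Γ Δ Γ' Δ' : Multiset Fm}

theorem add_right (h : GE Ax Γ Δ) (Λ Ξ : Multiset Fm) : GE Ax (Γ + Λ) (Δ + Ξ) := by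
  induction h with simp only [Multiset.cons_add, add_assoc] at *
  | init => exact .init
  | botL => exact .botL
  | topR => exact .topR
  | negL _ ih => exact .negL ih
  | negR _ ih => exact .negR ih
  | andL _ ih => exact .andL ih
  | andR _ _ ihA ihB => exact .andR ihA ihB
  | orL _ _ ihA ihB => exact .orL ihA ihB
  | orR _ ih => exact .orR ih
  | impL _ _ ihB ihA => exact .impL ihB ihA
  | impR _ ih => exact .impR ih
  | conL _ ih => exact .conL ih
  | conR _ ih => exact .conR ih
  | ruleE hm hc hAB hBA => exact .ruleE hm hc hAB hBA
  | ruleEn hm hc hl hlB hBl => exact .ruleEn hm hc hl hlB hBl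
  | ruleM hm hc hAB => exact .ruleM hm hc hAB
  | ruleMn hm hc hl hlB => exact .ruleMn hm hc hl hlB
  | ruleN hn hA => exact .ruleN hn hA

theorem mono (h : GE Ax Γ Δ) (hΓ : Γ ≤ Γ') (hΔ : Δ ≤ Δ') : GE Ax Γ' Δ' := by
  obtain ⟨Λ, rfl⟩ := Multiset.le_iff_exists_add.1 hΓ
  obtain ⟨Ξ, rfl⟩ := Multiset.le_iff_exists_add.1 hΔ
  exact h.add_right Λ Ξ

/-- The common form of the rules `(E)`, `(En)`, `(M)` and `(Mn)`, except for the instance of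
`(Mn)` without principal formulas on the left. -/
theorem box {Sg : Multiset Fm} {B : Fm} (hne : Sg ≠ 0) (hcard : Ax.c = true ∨ Sg.card = 1)
    (hB : GE Ax Sg {B}) (hconv : Ax.m = true ∨ ∀ A ∈ Sg, GE Ax {B} {A}) :
    GE Ax (Sg.map Fm.box + Γ) (Fm.box B ::ₘ Δ) := by
  cases hc : Ax.c with
  | true =>
    induction Sg using Quotient.inductionOn with | _ l
    have hl : l ≠ [] := by simpa using hne
    cases hm : Ax.m with
    | true => exact .ruleMn hm hc (.inl hl) hB
    | false => exact .ruleEn hm hc hl hB (hconv.resolve_left (by simp [hm]))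
  | false =>
    obtain ⟨A, rfl⟩ := Multiset.card_eq_one.1 (hcard.resolve_left (by simp [hc]))
    rw [Multiset.map_singleton, Multiset.singleton_add]
    cases hm : Ax.m with
    | true => exact .ruleM hm hc hB
    | false =>
      exact .ruleE hm hc hB (hconv.resolve_left (by simp [hm]) A (Multiset.mem_singleton_self A))

end GE

theorem exists_modifyLast_add_eq {α : Type*} [AddZeroClass α] (x : α) (pre post : List α) :
    ∃ y post', ∀ c, (pre ++ c :: post).modifyLast (· + x) = pre ++ (c + y) :: post' := by
  cases post using List.reverseRecOn with
  | nil => exact ⟨x, [], fun c => List.modifyLast_concat _ c pre⟩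
  | append_singleton post d =>
    refine ⟨0, post ++ [d + x], fun c => ?_⟩
    simpa using List.modifyLast_concat (· + x) d (pre ++ c :: post)

/-- Some component of `G` is derivable in the sequent calculus, where the last component is
read with the formulas of `X` added to it. -/
def HasDerivableComponent (Ax : EAx) (X : Cmp) (G : List Cmp) : Prop :=
  ∃ c ∈ G.modifyLast (· + X), GE Ax c.1 c.2

namespace HasDerivableComponent

variable {Ax : EAx} {X : Cmp} {G pre post : List Cmp}

theorem concat_iff {c : Cmp} : HasDerivableComponent Ax X (G ++ [c]) ↔
    (∃ d ∈ G, GE Ax d.1 d.2) ∨ GE Ax (c.1 + X.1) (c.2 + X.2) := by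
  simp [HasDerivableComponent, List.modifyLast_concat, or_and_right, exists_or]

theorem of_component {c : Cmp} (hc : ∀ Λ Ξ, GE Ax (c.1 + Λ) (c.2 + Ξ)) :
    HasDerivableComponent Ax X (pre ++ c :: post) := by
  obtain ⟨Y, post', h⟩ := exists_modifyLast_add_eq X pre post
  exact ⟨c + Y, by simp [h], hc Y.1 Y.2⟩

theorem map₂ {c₁ c₂ c : Cmp}
    (rule : ∀ Λ Ξ, GE Ax (c₁.1 + Λ) (c₁.2 + Ξ) → GE Ax (c₂.1 + Λ) (c₂.2 + Ξ) →
      GE Ax (c.1 + Λ) (c.2 + Ξ))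
    (h₁ : HasDerivableComponent Ax X (pre ++ c₁ :: post))
    (h₂ : HasDerivableComponent Ax X (pre ++ c₂ :: post)) :
    HasDerivableComponent Ax X (pre ++ c :: post) := by
  obtain ⟨Y, post', h⟩ := exists_modifyLast_add_eq X pre post
  simp only [HasDerivableComponent, h, List.mem_append, List.mem_cons, or_and_right, exists_or,
    exists_eq_left, Prod.fst_add, Prod.snd_add] at h₁ h₂ ⊢
  obtain hpre | hc₁ | hpost := h₁
  · exact .inl hpre
  · exact h₂.imp_right (.imp_left (rule Y.1 Y.2 hc₁))
  · exact .inr (.inr hpost)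

theorem or_derivable_of_le {c c' d : Cmp} (h : HasDerivableComponent Ax 0 (G ++ [c, d]))
    (hc : c ≤ c') :
    HasDerivableComponent Ax X (G ++ [c']) ∨ GE Ax d.1 d.2 := by
  rw [List.append_cons, concat_iff] at h
  obtain ⟨e, he, hGE⟩ | hd := h
  · refine .inl (concat_iff.2 ?_)
    obtain he | rfl := List.mem_append.1 he |>.imp_right List.mem_singleton.1
    · exact .inl ⟨e, he, hGE⟩
    · exact .inr ((hGE.mono hc.1 hc.2).add_right _ _)
  · exact .inr (by simpa using hd)

end HasDerivableComponent

/-- The premises `B ⇒ A`, for `A ∈ Σ`, of the modal rule under construction in a binary nesting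
with second component `Ω`. They are only needed, and only provided by `Ω = ({B}, 0)`, in the
absence of the axiom `M`. -/
def ConverseDerivable (Ax : EAx) (B : Fm) (Sg : Multiset Fm) (Ω : Cmp) : Prop :=
  Ax.m = true ∨ Ω = ({B}, 0) ∧ ∀ A ∈ Sg, GE Ax {B} {A}

theorem ConverseDerivable.cons {Ax : EAx} {A B : Fm} {Sg : Multiset Fm} {Ω : Cmp}
    (h : ConverseDerivable Ax B Sg Ω) (hA : GE Ax Ω.1 (A ::ₘ Ω.2)) :
    ConverseDerivable Ax B (A ::ₘ Sg) Ω :=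
  h.imp_right fun ⟨hΩ, hSg⟩ => ⟨hΩ, Multiset.forall_mem_cons.2 ⟨by subst hΩ; exact hA, hSg⟩⟩

/-- `Discharges Ax ep X`: the sequent `X` consists of the formulas missing from the last component
of a linear nested sequent terminated by `ep`. These are the boxed formulas `□Σ ⇒ □B` consumed by
the rules that have led from the premise of `□_R^e` to the binary nesting `ep`; without the axiom
`C`, the first formula consumed on the left closes the nesting, so that `Σ` stays empty. -/
inductive Discharges (Ax : EAx) : Option (Cmp × Cmp) → Cmp → Prop
  | none : Discharges Ax none 0
  | some {B : Fm} {Sg : Multiset Fm} {Ω : Cmp} (hagg : Ax.c = true ∨ Sg = 0)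
      (hconv : ConverseDerivable Ax B Sg Ω) :
      Discharges Ax (some ((Sg, {B}), Ω)) (Sg.map Fm.box, {Fm.box B})

namespace Discharges

variable {Ax : EAx} {A : Fm} {Sg Pp : Multiset Fm} {Ω X : Cmp}

theorem box_left (hX : Discharges Ax (Option.some ((Sg, Pp), Ω)) X)
    (hSg : GE Ax (A ::ₘ Sg) Pp) (hΩ : GE Ax Ω.1 (A ::ₘ Ω.2)) (Γ Δ : Multiset Fm) :
    GE Ax (Fm.box A ::ₘ Γ + X.1) (Δ + X.2) := by
  obtain _ | ⟨hagg, hconv⟩ := hX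
  have hbox := GE.box (Γ := Γ) (Δ := Δ) Multiset.cons_ne_zero
    (hagg.imp_right fun h => by simp [h]) hSg ((hconv.cons hΩ).imp_right And.right)
  rwa [add_comm Δ, Multiset.singleton_add, Multiset.cons_add, add_comm Γ, ← Multiset.cons_add,
    ← Multiset.map_cons]

theorem cons (hX : Discharges Ax (Option.some ((Sg, Pp), Ω)) X) (hc : Ax.c = true)
    (hΩ : GE Ax Ω.1 (A ::ₘ Ω.2)) :
    Discharges Ax (Option.some ((A ::ₘ Sg, Pp), Ω)) (Fm.box A ::ₘ X.1, X.2) := by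
  obtain _ | ⟨-, hconv⟩ := hX
  rw [← Multiset.map_cons]
  exact .some (.inl hc) (hconv.cons hΩ)

theorem of_m {Ω' : Cmp} (hX : Discharges Ax (Option.some ((Sg, Pp), Ω)) X) (hm : Ax.m = true) :
    Discharges Ax (Option.some ((Sg, Pp), Ω')) X := by
  obtain _ | ⟨hagg, -⟩ := hX
  exact .some hagg (.inl hm)

end Discharges

/-- The invariant of derivations in the linear nested sequent calculi: some component is
derivable in the sequent calculus, whatever formulas are still missing from the last one. -/
def LNSe.Extractable (Ax : EAx) (s : LNSe) : Prop :=
  ∀ X, Discharges Ax s.2 X → HasDerivableComponent Ax X s.1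

namespace LNSe.Extractable

variable {Ax : EAx} {G pre post : List Cmp} {ep : Option (Cmp × Cmp)} {Γ Δ : Multiset Fm}

theorem map₂ {c₁ c₂ c : Cmp} (h₁ : Extractable Ax (pre ++ c₁ :: post, ep))
    (h₂ : Extractable Ax (pre ++ c₂ :: post, ep))
    (rule : ∀ Λ Ξ, GE Ax (c₁.1 + Λ) (c₁.2 + Ξ) → GE Ax (c₂.1 + Λ) (c₂.2 + Ξ) →
      GE Ax (c.1 + Λ) (c.2 + Ξ)) :
    Extractable Ax (pre ++ c :: post, ep) :=
  fun X hX => .map₂ rule (h₁ X hX) (h₂ X hX)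

theorem map {c₁ c : Cmp} (h : Extractable Ax (pre ++ c₁ :: post, ep))
    (rule : ∀ Λ Ξ, GE Ax (c₁.1 + Λ) (c₁.2 + Ξ) → GE Ax (c.1 + Λ) (c.2 + Ξ)) :
    Extractable Ax (pre ++ c :: post, ep) :=
  h.map₂ h fun Λ Ξ h₁ _ => rule Λ Ξ h₁

theorem of_component {c : Cmp} (rule : ∀ Λ Ξ, GE Ax (c.1 + Λ) (c.2 + Ξ)) :
    Extractable Ax (pre ++ c :: post, ep) :=
  fun _ _ => .of_component rule

theorem boxRe {B : Fm} (h : Extractable Ax (G ++ [(Γ, Δ)], some ((0, {B}), ({B}, 0)))) :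
    Extractable Ax (G ++ [(Γ, Fm.box B ::ₘ Δ)], none) := by
  rintro _ ⟨⟩
  have hG := h _ (.some (.inr rfl) (.inr ⟨rfl, by simp⟩))
  rw [HasDerivableComponent.concat_iff] at hG ⊢
  simpa [add_comm Δ] using hG

theorem boxLe {Sg Pp Om Th : Multiset Fm} {A : Fm}
    (h₁ : Extractable Ax (G ++ [(Γ, Δ), (A ::ₘ Sg, Pp)], none))
    (h₂ : Extractable Ax (G ++ [(Γ, Δ), (Om, A ::ₘ Th)], none)) :
    Extractable Ax (G ++ [(Fm.box A ::ₘ Γ, Δ)], some ((Sg, Pp), (Om, Th))) := by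
  intro X hX
  have hle : (Γ, Δ) ≤ (Fm.box A ::ₘ Γ, Δ) := ⟨Multiset.le_cons_self _ _, le_rfl⟩
  obtain hG | hSg := (h₁ 0 .none).or_derivable_of_le hle
  · exact hG
  obtain hG | hOm := (h₂ 0 .none).or_derivable_of_le hle
  · exact hG
  exact HasDerivableComponent.concat_iff.2 (.inr (hX.box_left hSg hOm Γ Δ))

theorem ruleN {B : Fm} (hn : Ax.n = true) (h : Extractable Ax (G ++ [(Γ, Δ), (0, {B})], none)) :
    Extractable Ax (G ++ [(Γ, Fm.box B ::ₘ Δ)], none) := by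
  rintro _ ⟨⟩
  obtain hG | hB := (h 0 .none).or_derivable_of_le (c' := (Γ, Fm.box B ::ₘ Δ))
    ⟨le_rfl, Multiset.le_cons_self _ _⟩
  · exact hG
  · exact HasDerivableComponent.concat_iff.2 (.inr ((GE.ruleN hn hB).add_right _ _))

theorem ruleM {Sg Pp Om Om' Th : Multiset Fm} (hm : Ax.m = true)
    (h : Extractable Ax (G, some ((Sg, Pp), (Om, Th)))) :
    Extractable Ax (G, some ((Sg, Pp), (Om', Th))) :=
  fun X hX => h X (hX.of_m hm)

theorem ruleC {Sg Pp Om Th : Multiset Fm} {A : Fm} (hc : Ax.c = true)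
    (h₁ : Extractable Ax (G ++ [(Γ, Δ)], some ((A ::ₘ Sg, Pp), (Om, Th))))
    (h₂ : Extractable Ax (G ++ [(Γ, Δ), (Om, A ::ₘ Th)], none)) :
    Extractable Ax (G ++ [(Fm.box A ::ₘ Γ, Δ)], some ((Sg, Pp), (Om, Th))) := by
  intro X hX
  obtain hG | hOm := (h₂ 0 .none).or_derivable_of_le (c' := (Fm.box A ::ₘ Γ, Δ))
    ⟨Multiset.le_cons_self _ _, le_rfl⟩
  · exact hG
  have hG := h₁ _ (hX.cons hc hOm)
  rw [HasDerivableComponent.concat_iff] at hG ⊢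
  simpa only [Multiset.cons_add, Multiset.add_cons] using hG

end LNSe.Extractable

namespace ED

variable {Ax : EAx} {con wk : Bool}

theorem extractable {s : LNSe} (h : ED Ax con wk s) : s.Extractable Ax := by
  induction h with
  | init => exact .of_component fun _ _ => by simpa only [Multiset.cons_add] using .init
  | botL => exact .of_component fun _ _ => by simpa only [Multiset.cons_add] using .botL
  | topR => exact .of_component fun _ _ => by simpa only [Multiset.cons_add] using .topR
  | negL _ ih => exact ih.map fun _ _ => by simpa only [Multiset.cons_add] using .negL
  | negR _ ih => exact ih.map fun _ _ => by simpa only [Multiset.cons_add] using .negR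
  | andL _ ih => exact ih.map fun _ _ => by simpa only [Multiset.cons_add] using .andL
  | andR _ _ ihA ihB =>
    exact ihA.map₂ ihB fun _ _ => by simpa only [Multiset.cons_add] using .andR
  | orL _ _ ihA ihB =>
    exact ihA.map₂ ihB fun _ _ => by simpa only [Multiset.cons_add] using .orL
  | orR _ ih => exact ih.map fun _ _ => by simpa only [Multiset.cons_add] using .orR
  | impL _ _ ihB ihA =>
    exact ihB.map₂ ihA fun _ _ => by simpa only [Multiset.cons_add] using .impL
  | impR _ ih => exact ih.map fun _ _ => by simpa only [Multiset.cons_add] using .impR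
  | conL _ _ ih => exact ih.map fun _ _ => by simpa only [Multiset.cons_add] using .conL
  | conR _ _ ih => exact ih.map fun _ _ => by simpa only [Multiset.cons_add] using .conR
  | wkL _ _ ih =>
    exact ih.map fun _ _ h => h.mono (add_le_add_left (Multiset.le_cons_self _ _) _) le_rfl
  | wkR _ _ ih =>
    exact ih.map fun _ _ h => h.mono le_rfl (add_le_add_left (Multiset.le_cons_self _ _) _)
  | boxRe _ ih => exact ih.boxRe
  | boxLe _ _ ih₁ ih₂ => exact ih₁.boxLe ih₂
  | ruleN hn _ ih => exact ih.ruleN hn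
  | ruleM hm _ ih => exact ih.ruleM hm
  | ruleC hc _ _ ih₁ ih₂ => exact ih₁.ruleC hc ih₂

theorem toGE {Γ Δ : Multiset Fm} (h : ED Ax con wk ([(Γ, Δ)], none)) : GE Ax Γ Δ := by
  have hG := HasDerivableComponent.concat_iff (G := []) |>.1 (h.extractable 0 .none)
  simpa using hG

end ED

/-- The filter on valuations generated by the sets of models of the theorems of `E𝒜`. A property
of valuations holds eventually if it follows by propositional reasoning from some theorem. -/
def theoremFilter (Ax : EAx) : Filter (Fm → Prop) where
  sets := {S | ∃ A, EThm Ax A ∧ ∀ v, evalP v A → v ∈ S}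
  univ_sets := ⟨.top, .taut fun _ => trivial, fun _ _ => trivial⟩
  sets_of_superset := fun ⟨A, hA, hAS⟩ hST => ⟨A, hA, fun v hv => hST (hAS v hv)⟩
  inter_sets := fun ⟨A, hA, hAS⟩ ⟨B, hB, hBT⟩ =>
    have hAB : EThm Ax (.imp A (.imp B (.and A B))) := .taut fun _ hvA hvB => ⟨hvA, hvB⟩
    ⟨.and A B, .mp (.mp hAB hA) hB, fun v hv => ⟨hAS v hv.1, hBT v hv.2⟩⟩

/-- The conjunction of a list of formulas, ending in `⊤` so that it makes sense for the empty
list. -/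
def Fm.conj (l : List Fm) : Fm := l.foldr .and .top

theorem evalP_conj {v : Fm → Prop} {l : List Fm} : evalP v (.conj l) ↔ ∀ A ∈ l, evalP v A := by
  induction l with
  | nil => simp [Fm.conj, evalP]
  | cons A l ih => simpa [Fm.conj, evalP] using and_congr_right fun _ => ih

namespace EThm

variable {Ax : EAx} {A B : Fm}

theorem eventually_evalP_iff : (∀ᶠ v in theoremFilter Ax, evalP v A) ↔ EThm Ax A :=
  ⟨fun ⟨_, hB, hBA⟩ => .mp (.taut hBA) hB, fun hA => ⟨A, hA, fun _ => id⟩⟩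

theorem eventually_box_congr (h : ∀ᶠ v in theoremFilter Ax, evalP v A ↔ evalP v B) :
    ∀ᶠ v in theoremFilter Ax, evalP v (.box A) ↔ evalP v (.box B) := by
  have hAB : EThm Ax (.imp A B) := eventually_evalP_iff.1 (h.mono fun _ => Iff.mp)
  have hBA : EThm Ax (.imp B A) := eventually_evalP_iff.1 (h.mono fun _ => Iff.mpr)
  filter_upwards [eventually_evalP_iff.2 (cong hAB hBA), eventually_evalP_iff.2 (cong hBA hAB)]
    with v h₁ h₂ using ⟨h₁, h₂⟩

theorem eventually_box_mono (hm : Ax.m = true)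
    (h : ∀ᶠ v in theoremFilter Ax, evalP v A → evalP v B) :
    ∀ᶠ v in theoremFilter Ax, evalP v (.box A) → evalP v (.box B) := by
  have hA : ∀ᶠ v in theoremFilter Ax, evalP v A ↔ evalP v (.and A B) :=
    h.mono fun _ hAB => ⟨fun hA => ⟨hA, hAB hA⟩, And.left⟩
  filter_upwards [eventually_box_congr hA, eventually_evalP_iff.2 (axM (A := A) (B := B) hm)]
    with v hbox hM hboxA using (hM (hbox.1 hboxA)).2

theorem eventually_box (hn : Ax.n = true) (h : ∀ᶠ v in theoremFilter Ax, evalP v A) :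
    ∀ᶠ v in theoremFilter Ax, evalP v (.box A) := by
  have hA : ∀ᶠ v in theoremFilter Ax, evalP v .top ↔ evalP v A :=
    h.mono fun _ hA => iff_of_true trivial hA
  filter_upwards [eventually_box_congr hA, eventually_evalP_iff.2 (axN hn)]
    with v hbox hN using hbox.1 hN

theorem eventually_box_conj (hc : Ax.c = true) {l : List Fm} (hl : l ≠ [] ∨ Ax.n = true) :
    ∀ᶠ v in theoremFilter Ax, (∀ A ∈ l, evalP v (.box A)) → evalP v (.box (.conj l)) := by
  induction l with
  | nil =>
    have hN := eventually_evalP_iff.2 (axN (hl.resolve_left (· rfl)))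
    exact hN.mono fun _ hbox _ => hbox
  | cons A l ih =>
    obtain rfl | hne := eq_or_ne l []
    · have hA : ∀ᶠ v in theoremFilter Ax, evalP v A ↔ evalP v (.conj [A]) :=
        .of_forall fun _ => by simp [evalP_conj]
      exact (eventually_box_congr hA).mono fun _ hbox hall => hbox.1 (hall A (by simp))
    · filter_upwards [ih (.inl hne), eventually_evalP_iff.2 (axC (A := A) (B := .conj l) hc)]
        with v hconj hC hall
      obtain ⟨hA, hl⟩ := List.forall_mem_cons.1 hall
      exact hC ⟨hA, hconj hl⟩

end EThm

/-- Truth of the sequent `Γ ⇒ Δ` under the valuation `v`. -/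
def Holds (v : Fm → Prop) (Γ Δ : Multiset Fm) : Prop :=
  (∀ A ∈ Γ, evalP v A) → ∃ B ∈ Δ, evalP v B

section Holds

variable {v : Fm → Prop} {Γ Δ : Multiset Fm} {A B : Fm}

theorem holds_cons_left : Holds v (A ::ₘ Γ) Δ ↔ (evalP v A → Holds v Γ Δ) := by
  simp [Holds]

theorem holds_cons_right : Holds v Γ (B ::ₘ Δ) ↔ evalP v B ∨ Holds v Γ Δ := by
  simp only [Holds, Multiset.mem_cons, or_and_right, exists_or, exists_eq_left]
  tauto

theorem holds_singleton_right : Holds v Γ {B} ↔ ((∀ A ∈ Γ, evalP v A) → evalP v B) := by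
  simp [Holds]

theorem holds_map_box_add {l : List Fm} :
    Holds v (↑(l.map Fm.box) + Γ) Δ ↔ ((∀ A ∈ l, evalP v (.box A)) → Holds v Γ Δ) := by
  simp only [Holds, Multiset.mem_add, Multiset.mem_coe, List.mem_map, or_imp, forall_and,
    forall_exists_index, and_imp, forall_apply_eq_imp_iff₂]

end Holds

theorem GE.eventually_holds {Ax : EAx} {Γ Δ : Multiset Fm} (h : GE Ax Γ Δ) :
    ∀ᶠ v in theoremFilter Ax, Holds v Γ Δ := by
  induction h with
    simp only [holds_cons_left, holds_cons_right, holds_map_box_add, holds_singleton_right, evalP,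
      Multiset.mem_coe, Multiset.mem_singleton, Multiset.notMem_zero, forall_eq, false_imp_iff,
      implies_true, true_imp_iff] at *
  | init | botL | topR => exact .of_forall fun v => by tauto
  | negL _ ih | negR _ ih | andL _ ih | orR _ ih | impR _ ih | conL _ ih | conR _ ih =>
    filter_upwards [ih] with v; tauto
  | andR _ _ ih₁ ih₂ | orL _ _ ih₁ ih₂ | impL _ _ ih₁ ih₂ =>
    filter_upwards [ih₁, ih₂] with v; tauto
  | @ruleE _ _ A B _ _ _ _ ihAB ihBA =>
    have hAB : ∀ᶠ v in theoremFilter Ax, evalP v A ↔ evalP v B := by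
      filter_upwards [ihAB, ihBA] with v using Iff.intro
    filter_upwards [EThm.eventually_box_congr hAB] with v hbox; tauto
  | @ruleEn _ _ B l _ hc hl _ _ ihlB ihBl =>
    have hlB : ∀ᶠ v in theoremFilter Ax, evalP v (.conj l) ↔ evalP v B := by
      filter_upwards [ihlB, (Filter.eventually_all_finite l.finite_toSet).2 ihBl] with v hlB hBl
        using evalP_conj.trans ⟨hlB, fun hB A hA => hBl A hA hB⟩
    filter_upwards [EThm.eventually_box_congr hlB, EThm.eventually_box_conj hc (.inl hl)]
      with v hbox hconj; tauto
  | ruleM hm _ _ ih =>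
    filter_upwards [EThm.eventually_box_mono hm ih] with v hbox; tauto
  | @ruleMn _ _ B l hm hc hl _ ih =>
    have hlB : ∀ᶠ v in theoremFilter Ax, evalP v (.conj l) → evalP v B := by
      simpa only [evalP_conj] using ih
    filter_upwards [EThm.eventually_box_mono hm hlB, EThm.eventually_box_conj hc hl]
      with v hbox hconj; tauto
  | ruleN hn _ ih => exact (EThm.eventually_box hn ih).mono fun _ => .inl

theorem LNSe_sound_general (Ax : EAx) (con wk : Bool) :
    (∀ Γ Δ : Multiset Fm, ED Ax con wk ([(Γ, Δ)], none) → GE Ax Γ Δ) ∧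
    (∀ A : Fm, ED Ax con wk ([(0, {A})], none) → EThm Ax A) := by
  refine ⟨fun Γ Δ h => h.toGE, fun A h => EThm.eventually_evalP_iff.1 ?_⟩
  simpa [Holds] using h.toGE.eventually_holds

/-- Soundness of the linear nested sequent calculi for non-normal modal
logics:  every single-component linear nested sequent derivable in
`LNS_E𝒜Con` is derivable in the sequent calculus `G_E𝒜Con`; consequently, if
`⇒ A` is derivable in `LNS_E𝒜ConW` then `A ∈ E𝒜`. -/
theorem LNSe_sound (Ax : EAx) :
    (∀ Γ Δ : Multiset Fm, ED Ax true false ([(Γ, Δ)], none) → GE Ax Γ Δ) ∧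
    (∀ A : Fm, ED Ax true true ([(0, {A})], none) → EThm Ax A) :=
  ⟨(LNSe_sound_general Ax true false).1, (LNSe_sound_general Ax true true).2⟩
end
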